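/- Let k be a field, T = {(x,y) ∈ ℝ² : x + y > 0} the strictly upper-triangular subposet of ℝ², and M : T → Vec_k a pointwise finite-dimensional, middle exact, indecomposable persistence module. Suppose there exist a = (x,y), b = (x,y'), c = (x',y) in T with x ≤ x', y ≤ y' and Ker(M_{ba}) ∩ Ker(M_{ca}) ≠ 0. Then M ≅ k_{I ∩ T} for a block I ⊆ ℝ² of type (db), i.e., I = J_S × J_T with J_S, J_T ⊆ ℝ interval ideals. -/

import Mathlib

namespace PMod

variable (k : Type) [Field k]

/-- A persistence module over a preordered set `P` with values in `k`-vector spaces. -/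
structure PersistenceModule (P : Type) [Preorder P] where
  V : P → Type
  [addCommGroup : ∀ x, AddCommGroup (V x)]
  [module : ∀ x, Module k (V x)]
  map : ∀ {x y : P}, x ≤ y → (V x →ₗ[k] V y)
  map_refl : ∀ x : P, map (le_refl x) = LinearMap.id
  map_trans : ∀ {x y z : P} (hxy : x ≤ y) (hyz : y ≤ z),
      map (le_trans hxy hyz) = (map hyz).comp (map hxy)

attribute [instance] PersistenceModule.addCommGroup PersistenceModule.module

variable {k}

/-- A morphism of persistence modules. -/
structure Hom {P : Type} [Preorder P] (M N : PersistenceModule k P) where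
  app : ∀ x, M.V x →ₗ[k] N.V x
  natural : ∀ {x y : P} (h : x ≤ y), (N.map h).comp (app x) = (app y).comp (M.map h)

/-- A morphism of persistence modules is an isomorphism iff it is pointwise bijective. -/
def IsIsoHom {P : Type} [Preorder P] {M N : PersistenceModule k P} (f : Hom M N) : Prop :=
  ∀ x, Function.Bijective (f.app x)

/-- Two persistence modules are isomorphic if there is a pointwise bijective
morphism between them. -/
def Isomorphic {P : Type} [Preorder P] (M N : PersistenceModule k P) : Prop :=
  ∃ f : Hom M N, IsIsoHom f

/-- The direct sum of a family of persistence modules, taken pointwise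
(`Π₀` is the finitely supported product, i.e. the direct sum). -/
noncomputable def directSum {P : Type} [Preorder P] {ι : Type}
    (N : ι → PersistenceModule k P) : PersistenceModule k P where
  V x := Π₀ i, (N i).V x
  map {x y} h := DFinsupp.mapRange.linearMap (fun i => (N i).map h)
  map_refl x := by
    have h : (fun i => (N i).map (le_refl x)) =
        fun i => (LinearMap.id : (N i).V x →ₗ[k] (N i).V x) :=
      funext fun i => (N i).map_refl x
    rw [h]
    exact DFinsupp.mapRange.linearMap_id
  map_trans {x y z} hxy hyz := by
    have h : (fun i => (N i).map (le_trans hxy hyz)) =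
        fun i => ((N i).map hyz).comp ((N i).map hxy) :=
      funext fun i => (N i).map_trans hxy hyz
    rw [h]
    exact DFinsupp.mapRange.linearMap_comp _ _

/-- The binary direct sum of two persistence modules, taken pointwise. -/
def sum2 {P : Type} [Preorder P] (M N : PersistenceModule k P) : PersistenceModule k P where
  V x := M.V x × N.V x
  map h := (M.map h).prodMap (N.map h)
  map_refl x := by
    rw [M.map_refl, N.map_refl]
    exact LinearMap.prodMap_id
  map_trans hxy hyz := by
    rw [M.map_trans hxy hyz, N.map_trans hxy hyz]
    exact (LinearMap.prodMap_comp _ _ _ _).symm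

/-- The zero persistence module predicate. -/
def IsZero {P : Type} [Preorder P] (M : PersistenceModule k P) : Prop :=
  ∀ x, ∀ v : M.V x, v = 0

/-- A persistence module is indecomposable if it is nonzero and whenever it is
isomorphic to a direct sum of two modules, one of the summands is zero. -/
def Indecomposable {P : Type} [Preorder P] (M : PersistenceModule k P) : Prop :=
  ¬ IsZero M ∧ ∀ M' M'' : PersistenceModule k P,
    Isomorphic M (sum2 M' M'') → IsZero M' ∨ IsZero M''

variable (k)

/-- A subset of a preordered set is convex. -/
def IsConvex {P : Type} [Preorder P] (I : Set P) : Prop :=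
  ∀ p q r : P, p ≤ q → q ≤ r → p ∈ I → r ∈ I → q ∈ I

open Classical in
/-- The fibre of the interval module `k_I` at `x`: a copy of `k` if `x ∈ I`, else `0`. -/
noncomputable def kMod {P : Type} [Preorder P] (I : Set P) (x : P) : Submodule k k :=
  if x ∈ I then ⊤ else ⊥

/-- The canonical generator of the fibre of the interval module at a point of `I`. -/
noncomputable def kGen {P : Type} [Preorder P] {I : Set P} {x : P} (hx : x ∈ I) :
    kMod k I x :=
  ⟨1, by simp [kMod, hx]⟩

open Classical in
/-- The structure maps of the interval module. -/
noncomputable def intervalMap {P : Type} [Preorder P] (I : Set P) {x y : P} (_ : x ≤ y) :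
    kMod k I x →ₗ[k] kMod k I y where
  toFun m := if hy : y ∈ I then ⟨(m : k), by simp [kMod, hy]⟩ else 0
  map_add' a b := by
    by_cases hy : y ∈ I <;> simp [hy]
  map_smul' c a := by
    by_cases hy : y ∈ I <;> simp [hy]

theorem kMod_coe_eq_zero {P : Type} [Preorder P] {I : Set P} {x : P} (hx : x ∉ I)
    (m : kMod k I x) : (m : k) = 0 := by
  have hm := m.2
  simp only [kMod, if_neg hx, Submodule.mem_bot] at hm
  exact hm

/-- The interval module `k_I` of a convex subset `I ⊆ P`: one-dimensional with
identity structure maps on `I`, and zero outside of `I`. -/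
noncomputable def intervalModule {P : Type} [Preorder P] (I : Set P) (hI : IsConvex I) :
    PersistenceModule k P where
  V x := kMod k I x
  map h := intervalMap k I h
  map_refl x := by
    ext m
    by_cases hx : x ∈ I
    · simp [intervalMap, hx]
    · simp [intervalMap, hx, kMod_coe_eq_zero k hx m]
  map_trans {x y z} hxy hyz := by
    ext m
    by_cases hz : z ∈ I
    · by_cases hy : y ∈ I
      · simp [intervalMap, hz, hy]
      · have hx : x ∉ I := fun hx => hy (hI x y z hxy hyz hx hz)
        simp [intervalMap, hz, hy, kMod_coe_eq_zero k hx m]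
    · by_cases hy : y ∈ I <;> simp [intervalMap, hz, hy]

/-- The constant persistence module `k_P` with value `k` everywhere. -/
def constModule (P : Type) [Preorder P] : PersistenceModule k P where
  V _ := k
  map _ := LinearMap.id
  map_refl _ := rfl
  map_trans _ _ := rfl

variable {k}

/-- Connectedness of a subset of a preordered set: any two points are joined by
a finite zigzag of comparable points inside the subset. -/
def IsConn {P : Type} [Preorder P] (I : Set P) : Prop :=
  ∀ p ∈ I, ∀ q ∈ I, ∃ (n : ℕ) (r : ℕ → P), r 0 = p ∧ r n = q ∧ (∀ i ≤ n, r i ∈ I) ∧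
    ∀ i < n, r i ≤ r (i + 1) ∨ r (i + 1) ≤ r i

/-- An interval in a poset: a nonempty convex connected subset. -/
def IsInterval {P : Type} [Preorder P] (I : Set P) : Prop :=
  I.Nonempty ∧ IsConvex I ∧ IsConn I

/-- An ideal: a subset closed under going down. -/
def IsIdeal {P : Type} [Preorder P] (I : Set P) : Prop :=
  ∀ p q : P, p ≤ q → q ∈ I → p ∈ I

/-- A filter: a subset closed under going up. -/
def IsFilter {P : Type} [Preorder P] (I : Set P) : Prop :=
  ∀ p q : P, p ≤ q → p ∈ I → q ∈ I

/-- An interval in a totally ordered set: a nonempty convex subset. -/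
def IsIntervalLin {P : Type} [Preorder P] (I : Set P) : Prop :=
  I.Nonempty ∧ IsConvex I

theorem IsConvex.prod {S T : Type} [Preorder S] [Preorder T] {A : Set S} {B : Set T}
    (hA : IsConvex A) (hB : IsConvex B) : IsConvex (A ×ˢ B) := by
  intro p q r hpq hqr hp hr
  exact ⟨hA _ _ _ hpq.1 hqr.1 hp.1 hr.1, hB _ _ _ hpq.2 hqr.2 hp.2 hr.2⟩

theorem isConvex_univ {P : Type} [Preorder P] : IsConvex (Set.univ : Set P) :=
  fun _ _ _ _ _ _ _ => trivial

/-- A block in the product of two totally ordered sets. -/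
def IsBlock {S T : Type} [LinearOrder S] [LinearOrder T] (I : Set (S × T)) : Prop :=
  I.Nonempty ∧ (
    (∃ JS JT, IsIntervalLin JS ∧ IsIdeal JS ∧ IsIntervalLin JT ∧ IsIdeal JT ∧ I = JS ×ˢ JT) ∨
    (∃ JS JT, IsIntervalLin JS ∧ IsFilter JS ∧ IsIntervalLin JT ∧ IsFilter JT ∧ I = JS ×ˢ JT) ∨
    (∃ JS, IsIntervalLin JS ∧ I = JS ×ˢ (Set.univ : Set T)) ∨
    (∃ JT, IsIntervalLin JT ∧ I = (Set.univ : Set S) ×ˢ JT))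

theorem IsBlock.isConvex {S T : Type} [LinearOrder S] [LinearOrder T] {I : Set (S × T)}
    (h : IsBlock I) : IsConvex I := by
  obtain ⟨-, h | h | h | h⟩ := h
  · obtain ⟨JS, JT, hS, -, hT, -, rfl⟩ := h
    exact hS.2.prod hT.2
  · obtain ⟨JS, JT, hS, -, hT, -, rfl⟩ := h
    exact hS.2.prod hT.2
  · obtain ⟨JS, hS, rfl⟩ := h
    exact hS.2.prod isConvex_univ
  · obtain ⟨JT, hT, rfl⟩ := h
    exact isConvex_univ.prod hT.2

/-- Convexity is inherited by preimages in a subposet. -/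
theorem IsConvex.preimage {P : Type} [Preorder P] {J : Set P} (hJ : IsConvex J)
    (Q : Set P) : IsConvex {p : Q | (p : P) ∈ J} :=
  fun p q r hpq hqr hp hr => hJ p q r hpq hqr hp hr

/-- The restriction of a persistence module to a subposet. -/
def restrict {P : Type} [Preorder P] (M : PersistenceModule k P) (Q : Set P) :
    PersistenceModule k Q where
  V q := M.V q
  map h := M.map h
  map_refl q := M.map_refl q
  map_trans hxy hyz := M.map_trans hxy hyz

/-- Middle exactness for persistence modules over a product of two totally ordered sets:
for every rectangle `a = (x,y) ≤ b = (x,y'), c = (x',y) ≤ d = (x',y')` the sequence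
`M_a → M_b ⊕ M_c → M_d` is exact at `M_b ⊕ M_c`. -/
def MiddleExact {S T : Type} [Preorder S] [Preorder T]
    (M : PersistenceModule k (S × T)) : Prop :=
  ∀ (x x' : S) (y y' : T) (hx : x ≤ x') (hy : y ≤ y')
    (mb : M.V (x, y')) (mc : M.V (x', y)),
    M.map (show (x, y') ≤ (x', y') from ⟨hx, le_refl y'⟩) mb =
      M.map (show (x', y) ≤ (x', y') from ⟨le_refl x', hy⟩) mc →
    ∃ ma : M.V (x, y),
      M.map (show (x, y) ≤ (x, y') from ⟨le_refl x, hy⟩) ma = mb ∧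
      M.map (show (x, y) ≤ (x', y) from ⟨hx, le_refl y⟩) ma = mc


theorem IsIdeal.isConvex {P : Type} [Preorder P] {I : Set P} (h : IsIdeal I) : IsConvex I :=
  fun _ q r _ hqr _ hr => h q r hqr hr

theorem IsFilter.isConvex {P : Type} [Preorder P] {I : Set P} (h : IsFilter I) : IsConvex I :=
  fun p q _ hpq _ hp _ => h p q hpq hp


/-- Convexity of the preimage of a convex subset of `T` in a subposet of `S × T`. -/
theorem IsConvex.preimageSnd {S T : Type} [Preorder S] [Preorder T] {J : Set T}
    (hJ : IsConvex J) (Q : Set (S × T)) : IsConvex {p : ↥Q | (p : S × T).2 ∈ J} :=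
  fun p q r hpq hqr hp hr =>
    hJ _ _ _ (Subtype.coe_le_coe.mpr hpq).2 (Subtype.coe_le_coe.mpr hqr).2 hp hr

end PMod

namespace PMod

/-- The strictly upper-triangular subset of the plane. -/
def upperT : Set (ℝ × ℝ) := {p | 0 < p.1 + p.2}

/-- The upper-triangular subset of the plane. -/
def upperTbar : Set (ℝ × ℝ) := {p | 0 ≤ p.1 + p.2}

/-- Middle exactness for a persistence module over a subposet `Q ⊆ ℝ²`: for every
rectangle `a = (x,y)`, `b = (x,y')`, `c = (x',y)`, `d = (x',y')` with all corners in
`Q`, the sequence `M_a → M_b ⊕ M_c → M_d` is exact at `M_b ⊕ M_c`. -/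
def MiddleExactSub {k : Type} [Field k] (Q : Set (ℝ × ℝ))
    (M : PersistenceModule k ↥Q) : Prop :=
  ∀ (x x' y y' : ℝ) (hx : x ≤ x') (hy : y ≤ y')
    (ha : (x, y) ∈ Q) (hb : (x, y') ∈ Q) (hc : (x', y) ∈ Q) (hd : (x', y') ∈ Q),
    ∀ (mb : M.V ⟨(x, y'), hb⟩) (mc : M.V ⟨(x', y), hc⟩),
      M.map (show (⟨(x, y'), hb⟩ : ↥Q) ≤ ⟨(x', y'), hd⟩ from
        Subtype.mk_le_mk.mpr ⟨hx, le_refl y'⟩) mb =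
      M.map (show (⟨(x', y), hc⟩ : ↥Q) ≤ ⟨(x', y'), hd⟩ from
        Subtype.mk_le_mk.mpr ⟨le_refl x', hy⟩) mc →
      ∃ ma : M.V ⟨(x, y), ha⟩,
        M.map (show (⟨(x, y), ha⟩ : ↥Q) ≤ ⟨(x, y'), hb⟩ from
          Subtype.mk_le_mk.mpr ⟨le_refl x, hy⟩) ma = mb ∧
        M.map (show (⟨(x, y), ha⟩ : ↥Q) ≤ ⟨(x', y), hc⟩ from
          Subtype.mk_le_mk.mpr ⟨hx, le_refl y⟩) ma = mc

/-- Convexity of the preimage in a subposet of a convex subset of `ℝ²`. -/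
theorem IsConvex.preimageSub {J : Set (ℝ × ℝ)} (hJ : IsConvex J) (Q : Set (ℝ × ℝ)) :
    IsConvex {p : ↥Q | (p : ℝ × ℝ) ∈ J} :=
  fun p q r hpq hqr hp hr =>
    hJ _ _ _ (Subtype.coe_le_coe.mpr hpq) (Subtype.coe_le_coe.mpr hqr) hp hr

end PMod

/-!
Let `m ≠ 0` lie in both kernels. By finite dimensionality, `m` can be chosen such that surviving
along the column and along the row of `a` forces survival at the opposite corner of the rectangle:
otherwise middle exactness would split off an element of a smaller kernel. The points of the row
and of the column up to which `m` survives then span a rectangle of type (db), and it is exactly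
below the points where `m` survives.

The images of `m` above `a`, together with zero outside of this rectangle, form a compatible
family over an up-set that contains every point far enough to the right or far enough up. Such a
family extends to a section of all of `M`: by Zorn's lemma and linear compactness of
finite-dimensional spaces it suffices to match finitely many prescribed values at one point `p`,
and this is done by moving along the row of `p` from the far right to `p`, using middle exactness
on one rectangle for each column met on the way.

The resulting section is nonzero exactly on the block, so it embeds the block module into `M`. The
block is a directed ideal, so a functional on the colimit of `M` over the block that does not
vanish on the section gives a retraction, and the block module is a direct summand of `M`.
-/

namespace PMod

theorem exists_forall_apply_eq_of_finset {R V ι : Type*} {W : ι → Type*} [Ring R]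
    [AddCommGroup V] [Module R V] [IsArtinian R V] [∀ i, AddCommGroup (W i)]
    [∀ i, Module R (W i)] (g : ∀ i, V →ₗ[R] W i) (w : ∀ i, W i)
    (h : ∀ F : Finset ι, ∃ v, ∀ i ∈ F, g i v = w i) : ∃ v, ∀ i, g i v = w i := by
  classical
  obtain ⟨F, hF⟩ := Finset.exists_inf_le fun i => LinearMap.ker (g i)
  obtain ⟨v, hv⟩ := h F
  refine ⟨v, fun i => ?_⟩
  obtain ⟨v', hv'⟩ := h (insert i F)
  have hmem : v - v' ∈ F.inf fun i => LinearMap.ker (g i) := by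
    simp only [Submodule.mem_finsetInf, LinearMap.mem_ker, map_sub, sub_eq_zero]
    exact fun j hj => (hv j hj).trans (hv' j (Finset.mem_insert_of_mem hj)).symm
  have hi : g i (v - v') = 0 := hF i hmem
  rw [map_sub, sub_eq_zero] at hi
  exact hi.trans (hv' i (Finset.mem_insert_self i F))

section Preorder

variable {k P : Type} [Field k] [Preorder P] {M N K : PersistenceModule k P}

theorem PersistenceModule.map_self (M : PersistenceModule k P) {q : P} (h : q ≤ q) (v : M.V q) :
    M.map h v = v :=
  LinearMap.congr_fun (M.map_refl q) v

theorem PersistenceModule.map_map (M : PersistenceModule k P) {p q r : P} (hpq : p ≤ q)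
    (hqr : q ≤ r) (v : M.V p) : M.map hqr (M.map hpq v) = M.map (hpq.trans hqr) v :=
  (LinearMap.congr_fun (M.map_trans hpq hqr) v).symm

/-! ### Direct summands -/

theorem Hom.map_app (f : Hom M N) {p q : P} (h : p ≤ q) (v : M.V p) :
    N.map h (f.app p v) = f.app q (M.map h v) :=
  LinearMap.congr_fun (f.natural h) v

/-- The kernel of a morphism of persistence modules, computed pointwise. -/
def Hom.ker (f : Hom M N) : PersistenceModule k P where
  V q := LinearMap.ker (f.app q)
  map h := (M.map h).restrict fun v hv => by
    rw [LinearMap.mem_ker] at hv ⊢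
    rw [← f.map_app h, hv, map_zero]
  map_refl q := LinearMap.ext fun v => Subtype.ext (M.map_self le_rfl v.1)
  map_trans hpq hqr := LinearMap.ext fun v => Subtype.ext (M.map_map hpq hqr v.1).symm

theorem isomorphic_sum2_ker (i : Hom N M) (p : Hom M N)
    (hpi : ∀ q, Function.LeftInverse (p.app q) (i.app q)) : Isomorphic M (sum2 N p.ker) := by
  let g (q : P) : M.V q →ₗ[k] LinearMap.ker (p.app q) :=
    (LinearMap.id - i.app q ∘ₗ p.app q).codRestrict _ fun v => by simp [hpi q (p.app q v)]
  have hg (q : P) (v : M.V q) : (g q v : M.V q) = v - i.app q (p.app q v) := rfl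
  have g_natural {q r : P} (h : q ≤ r) (v : M.V q) : p.ker.map h (g q v) = g r (M.map h v) := by
    refine Subtype.ext ?_
    change M.map h (v - i.app q (p.app q v)) = M.map h v - i.app r (p.app r (M.map h v))
    rw [map_sub, i.map_app, p.map_app]
  refine ⟨⟨fun q => (p.app q).prod (g q), fun h => LinearMap.ext fun v =>
    Prod.ext (p.map_app h v) (g_natural h v)⟩, fun q => ⟨?_, ?_⟩⟩
  · refine (injective_iff_map_eq_zero _).2 fun v hv => ?_
    have hpv : p.app q v = 0 := congrArg Prod.fst hv
    have hgv : g q v = 0 := congrArg Prod.snd hv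
    simpa [hpv] using (hg q v).symm.trans (congrArg Subtype.val hgv)
  · rintro ⟨n, w, hw⟩
    have hp : p.app q (i.app q n + w) = n := by
      rw [map_add, hpi q n, LinearMap.mem_ker.1 hw, add_zero]
    refine ⟨i.app q n + w, Prod.ext hp (Subtype.ext ?_)⟩
    change (i.app q n + w) - i.app q (p.app q (i.app q n + w)) = w
    rw [hp, add_sub_cancel_left]

theorem Indecomposable.isomorphic_of_isomorphic_sum2 (hM : Indecomposable M) (hN : ¬ IsZero N)
    (h : Isomorphic M (sum2 N K)) : Isomorphic M N := by
  have hK : IsZero K := (hM.2 N K h).resolve_left hN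
  obtain ⟨e, he⟩ := h
  refine ⟨⟨fun q => LinearMap.fst k _ _ ∘ₗ e.app q, fun h => LinearMap.ext fun v =>
    congrArg Prod.fst (e.map_app h v)⟩, fun q => ⟨fun v w hvw => ?_, fun n => ?_⟩⟩
  · exact (he q).1 (Prod.ext hvw ((hK q _).trans (hK q _).symm))
  · obtain ⟨v, hv⟩ := (he q).2 (n, 0)
    exact ⟨v, congrArg Prod.fst hv⟩

theorem not_isZero_intervalModule {I : Set P} (hI : IsConvex I) (hne : I.Nonempty) :
    ¬ IsZero (intervalModule k I hI) := by
  obtain ⟨p, hp⟩ := hne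
  exact fun h => one_ne_zero (congrArg Subtype.val (h p (kGen k hp)))

/-! ### Sections -/

/-- A section of `M`: a compatible choice of one element of every `M_q`, that is, an element
of the limit of `M`. -/
def IsSection (M : PersistenceModule k P) (f : ∀ q, M.V q) : Prop :=
  ∀ ⦃q r : P⦄ (h : q ≤ r), M.map h (f q) = f r

theorem IsSection.restrict {f : ∀ q, M.V q} (hf : IsSection M f) (I : Set P) :
    IsSection (PMod.restrict M I) fun q => f q :=
  fun _ _ h => hf h

/-- A compatible family of functionals on the spaces `M_q`, that is, a functional on the colimit
of `M`. -/
def IsCosection (M : PersistenceModule k P) (φ : ∀ q, M.V q →ₗ[k] k) : Prop :=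
  ∀ ⦃q r : P⦄ (h : q ≤ r) (v : M.V q), φ r (M.map h v) = φ q v

theorem IsSection.exists_isCosection [Nonempty P] [IsDirectedOrder P] {f : ∀ q, M.V q}
    (hf : IsSection M f) (hne : ∀ q, f q ≠ 0) :
    ∃ φ, IsCosection M φ ∧ ∀ q, φ q (f q) = 1 := by
  classical
  have : DirectedSystem M.V fun _ _ h => M.map h :=
    ⟨fun q v => M.map_self le_rfl v, fun _ _ _ hpq hqr v => M.map_map hpq hqr v⟩
  let of := Module.DirectLimit.of k P M.V fun _ _ h => M.map h
  have of_map {q r : P} (h : q ≤ r) (v : M.V q) : of r (M.map h v) = of q v :=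
    Module.DirectLimit.of_f
  have of_section (q r : P) : of q (f q) = of r (f r) := by
    obtain ⟨s, hqs, hrs⟩ := exists_ge_ge q r
    rw [← of_map hqs, ← of_map hrs, hf hqs, hf hrs]
  let p : P := Classical.arbitrary P
  have of_ne_zero : of p (f p) ≠ 0 := fun h => by
    obtain ⟨q, hpq, hq⟩ := Module.DirectLimit.of.zero_exact h
    exact hne q ((hf hpq).symm.trans hq)
  obtain ⟨ψ, hψ⟩ := Module.Projective.exists_dual_ne_zero k of_ne_zero
  refine ⟨fun q => (ψ (of p (f p)))⁻¹ • ψ ∘ₗ of q, fun q r h v => ?_, fun q => ?_⟩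
  · exact congrArg (fun z => (ψ (of p (f p)))⁻¹ * ψ z) (of_map h v)
  · change (ψ (of p (f p)))⁻¹ * ψ (of q (f q)) = 1
    rw [of_section q p, inv_mul_cancel₀ hψ]

/-! ### Interval summands -/

theorem coe_intervalMap {I : Set P} {q r : P} (h : q ≤ r) (hr : r ∈ I) (c : kMod k I q) :
    (intervalMap k I h c : k) = c := by
  simp [intervalMap, hr]

/-- The morphism `k_I → M` given by a section of `M` that vanishes outside of `I`. -/
noncomputable def IsSection.homOfInterval {f : ∀ q, M.V q} (hf : IsSection M f) {I : Set P}
    (hI : IsConvex I) (hf0 : ∀ q ∉ I, f q = 0) : Hom (intervalModule k I hI) M where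
  app q := LinearMap.toSpanSingleton k (M.V q) (f q) ∘ₗ (kMod k I q).subtype
  natural {q r} h := LinearMap.ext fun c : kMod k I q => by
    change M.map h (c.1 • f q) = (intervalMap k I h c).1 • f r
    rw [map_smul, hf h]
    by_cases hr : r ∈ I
    · rw [coe_intervalMap h hr]
    · rw [hf0 r hr, smul_zero, smul_zero]

open Classical in
/-- The fibre at `q` of the morphism to `k_I` given by functionals on the spaces `M_q`, `q ∈ I`. -/
noncomputable def toIntervalFibre {I : Set P} (φ : ∀ q : I, M.V q →ₗ[k] k) (q : P) :
    M.V q →ₗ[k] kMod k I q :=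
  if hq : q ∈ I then (φ ⟨q, hq⟩).codRestrict (kMod k I q) fun v => by simp [kMod, hq] else 0

theorem coe_toIntervalFibre {I : Set P} (φ : ∀ q : I, M.V q →ₗ[k] k) {q : P} (hq : q ∈ I)
    (v : M.V q) : (toIntervalFibre φ q v : k) = φ ⟨q, hq⟩ v := by
  simp [toIntervalFibre, hq]

/-- The morphism `M → k_I` given by a compatible family of functionals over the ideal `I`. -/
noncomputable def IsCosection.homToInterval {I : Set P} {φ : ∀ q : I, M.V q →ₗ[k] k}
    (hφ : IsCosection (PMod.restrict M I) φ) (hI : IsIdeal I) :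
    Hom M (intervalModule k I hI.isConvex) where
  app := toIntervalFibre φ
  natural {q r} h := LinearMap.ext fun v => Subtype.ext <| by
    change (intervalMap k I h (toIntervalFibre φ q v)).1 = (toIntervalFibre φ r (M.map h v)).1
    by_cases hr : r ∈ I
    · have hq : q ∈ I := hI q r h hr
      rw [coe_intervalMap h hr, coe_toIntervalFibre φ hq, coe_toIntervalFibre φ hr]
      exact (hφ (q := ⟨q, hq⟩) (r := ⟨r, hr⟩) h v).symm
    · rw [kMod_coe_eq_zero k hr, kMod_coe_eq_zero k hr]

theorem IsSection.exists_isomorphic_sum2_intervalModule {f : ∀ q, M.V q} (hf : IsSection M f)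
    {I : Set P} (hI : IsIdeal I) (hne : I.Nonempty) (hdir : DirectedOn (· ≤ ·) I)
    (hfI : ∀ q, f q ≠ 0 ↔ q ∈ I) :
    ∃ N, Isomorphic M (sum2 (intervalModule k I hI.isConvex) N) := by
  have : Nonempty I := hne.to_subtype
  have : IsDirectedOrder I := ⟨directedOn_iff_directed.1 hdir⟩
  obtain ⟨φ, hφ, hφf⟩ : ∃ φ : ∀ q : I, M.V q →ₗ[k] k,
      IsCosection (PMod.restrict M I) φ ∧ ∀ q : I, φ q (f q) = 1 :=
    (hf.restrict I).exists_isCosection fun q => (hfI q).2 q.2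
  let i := hf.homOfInterval hI.isConvex fun q hq => not_not.1 (mt (hfI q).1 hq)
  refine ⟨_, isomorphic_sum2_ker i (hφ.homToInterval hI) fun q (c : kMod k I q) =>
    Subtype.ext ?_⟩
  change (toIntervalFibre φ q (c.1 • f q)).1 = c.1
  by_cases hq : q ∈ I
  · rw [map_smul, Submodule.coe_smul, coe_toIntervalFibre φ hq, hφf ⟨q, hq⟩, smul_eq_mul, mul_one]
  · rw [kMod_coe_eq_zero k hq, kMod_coe_eq_zero k hq]

/-! ### Extension of partial sections -/

/-- The graph of a section of `M` over some up-set of `P`. Recording only the graph makes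
partial sections ordered by inclusion, without values outside of the up-set. -/
structure IsPartialSection (M : PersistenceModule k P) (s : Set (Σ q, M.V q)) : Prop where
  unique : ∀ ⦃q : P⦄ ⦃v w : M.V q⦄, ⟨q, v⟩ ∈ s → ⟨q, w⟩ ∈ s → v = w
  map_mem : ∀ ⦃q r : P⦄ (h : q ≤ r) ⦃v : M.V q⦄, ⟨q, v⟩ ∈ s → ⟨r, M.map h v⟩ ∈ s

/-- The graph of the partial section over the principal up-set of `p` generated by `v ∈ M_p`. -/
def cone {p : P} (v : M.V p) : Set (Σ q, M.V q) :=
  {z | ∃ h : p ≤ z.1, M.map h v = z.2}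

theorem isPartialSection_cone {p : P} (v : M.V p) : IsPartialSection M (cone v) where
  unique := fun _ _ _ ⟨_, hv⟩ ⟨_, hw⟩ => hv.symm.trans hw
  map_mem := fun _ _ hqr _ ⟨h, hw⟩ =>
    ⟨h.trans hqr, (M.map_map h hqr v).symm.trans (congrArg (M.map hqr) hw)⟩

theorem isPartialSection_zero_compl {I : Set P} (hI : IsIdeal I) :
    IsPartialSection M {z | z.1 ∉ I ∧ z.2 = 0} where
  unique := fun _ _ _ hv hw => hv.2.trans hw.2.symm
  map_mem := by
    rintro q r h v ⟨hq, hv⟩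
    exact ⟨fun hr => hq (hI q r h hr), by rw [show v = 0 from hv, map_zero]⟩

theorem IsPartialSection.union {s t : Set (Σ q, M.V q)} (hs : IsPartialSection M s)
    (ht : IsPartialSection M t)
    (hst : ∀ ⦃q : P⦄ ⦃v w : M.V q⦄, ⟨q, v⟩ ∈ s → ⟨q, w⟩ ∈ t → v = w) :
    IsPartialSection M (s ∪ t) where
  unique := by
    rintro q v w (hv | hv) (hw | hw)
    · exact hs.unique hv hw
    · exact hst hv hw
    · exact (hst hw hv).symm
    · exact ht.unique hv hw
  map_mem := fun _ _ h _ => Or.imp (hs.map_mem h ·) (ht.map_mem h ·)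

theorem isPartialSection_sUnion {C : Set (Set (Σ q, M.V q))}
    (hC : ∀ s ∈ C, IsPartialSection M s) (hchain : IsChain (· ⊆ ·) C) :
    IsPartialSection M (⋃₀ C) where
  unique := by
    rintro q v w ⟨s, hs, hv⟩ ⟨t, ht, hw⟩
    obtain ⟨u, hu, hsu, htu⟩ := hchain.directedOn s hs t ht
    exact (hC u hu).unique (hsu hv) (htu hw)
  map_mem := by
    rintro q r h v ⟨s, hs, hv⟩
    exact ⟨s, hs, (hC s hs).map_mem h hv⟩

theorem IsPartialSection.exists_isSection {s : Set (Σ q, M.V q)} (hs : IsPartialSection M s)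
    (hext : ∀ t, s ⊆ t → IsPartialSection M t → ∀ p, ∃ v : M.V p,
      ∀ ⦃q : P⦄ (h : p ≤ q) ⦃w : M.V q⦄, ⟨q, w⟩ ∈ t → M.map h v = w) :
    ∃ f, IsSection M f ∧ ∀ z ∈ s, f z.1 = z.2 := by
  obtain ⟨t, hst, ht⟩ := zorn_subset_nonempty {t | IsPartialSection M t}
    (fun C hC hchain _ => ⟨_, isPartialSection_sUnion hC hchain, fun _ => Set.subset_sUnion_of_mem⟩)
    s hs
  have total (p : P) : ∃ v : M.V p, ⟨p, v⟩ ∈ t := by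
    obtain ⟨v, hv⟩ := hext t hst ht.prop p
    have hunion : IsPartialSection M (t ∪ cone v) := by
      refine ht.prop.union (isPartialSection_cone v) ?_
      rintro q w w' hw ⟨h, hw'⟩
      exact (hv h hw).symm.trans hw'
    exact ⟨v, ht.le_of_ge hunion Set.subset_union_left (Or.inr ⟨le_rfl, M.map_self le_rfl v⟩)⟩
  choose f hf using total
  exact ⟨f, fun q r h => ht.prop.unique (ht.prop.map_mem h (hf q)) (hf r),
    fun z hz => ht.prop.unique (hf z.1) (hst hz)⟩

theorem IsPartialSection.exists_isSection_of_finset (hfd : ∀ q, FiniteDimensional k (M.V q))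
    {s : Set (Σ q, M.V q)} (hs : IsPartialSection M s)
    (hext : ∀ t, s ⊆ t → IsPartialSection M t → ∀ p, ∀ F : Finset (Σ q, M.V q), ↑F ⊆ t →
      (∀ z ∈ F, p ≤ z.1) → ∃ v : M.V p, ∀ z ∈ F, z ∈ cone v) :
    ∃ f, IsSection M f ∧ ∀ z ∈ s, f z.1 = z.2 := by
  classical
  refine hs.exists_isSection fun t hst ht p => ?_
  have := hfd p
  obtain ⟨v, hv⟩ := exists_forall_apply_eq_of_finset (ι := {z // z ∈ t ∧ p ≤ z.1})
    (fun z => M.map z.2.2) (fun z => z.1.2) fun F => by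
      obtain ⟨v, hv⟩ := hext t hst ht p (F.image Subtype.val)
        (by simp +contextual [Set.subset_def]) (by simp +contextual)
      exact ⟨v, fun z hz => (hv z.1 (Finset.mem_image_of_mem _ hz)).2⟩
  exact ⟨v, fun q h w hw => hv ⟨⟨q, w⟩, hw, h⟩⟩

/-- The points `q ≥ p` at which `m ∈ M_p` survives, that is, has nonzero image in `M_q`. -/
def survivalSet {p : P} (m : M.V p) : Set P :=
  {q | ∃ h : p ≤ q, M.map h m ≠ 0}

theorem map_eq_zero_of_notMem_survivalSet {p q : P} {m : M.V p} (h : p ≤ q)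
    (hq : q ∉ survivalSet m) : M.map h m = 0 :=
  not_not.1 fun hne => hq ⟨h, hne⟩

theorem mem_survivalSet_of_le {p q r : P} {m : M.V p} (hr : r ∈ survivalSet m)
    (hpq : p ≤ q) (hqr : q ≤ r) : q ∈ survivalSet m :=
  ⟨hpq, fun hq => hr.2 (by rw [← M.map_map hpq hqr, hq, map_zero])⟩

end Preorder

/-! ### Middle exactness over up-sets of a product -/

section Product

variable {k S T : Type} [Field k] [LinearOrder S] [LinearOrder T] {Q : Set (S × T)}
  {M : PersistenceModule k Q} {a b c d : Q}

/-- The points `a = (x, y)`, `b = (x, y')`, `c = (x', y)`, `d = (x', y')` with `x ≤ x'` and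
`y ≤ y'` are the corners of a rectangle in `Q`. -/
structure IsRectangle (a b c d : Q) : Prop where
  left : a.1.1 = b.1.1
  right : c.1.1 = d.1.1
  bottom : a.1.2 = c.1.2
  top : b.1.2 = d.1.2
  le_ab : a ≤ b
  le_ac : a ≤ c

namespace IsRectangle

theorem le_bd (R : IsRectangle a b c d) : b ≤ d :=
  ⟨R.left.symm.le.trans (R.le_ac.1.trans R.right.le), R.top.le⟩

theorem le_cd (R : IsRectangle a b c d) : c ≤ d :=
  ⟨R.right.le, R.bottom.symm.le.trans (R.le_ab.2.trans R.top.le)⟩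

theorem of_isFilter (hQ : IsFilter Q) (hab : a ≤ b) (hac : a ≤ c) (hleft : a.1.1 = b.1.1)
    (hbottom : a.1.2 = c.1.2) :
    IsRectangle a b c ⟨(c.1.1, b.1.2), hQ c _ ⟨le_rfl, hbottom.symm.le.trans hab.2⟩ c.2⟩ :=
  ⟨hleft, rfl, hbottom, rfl, hab, hac⟩

end IsRectangle

/-- Middle exactness over a subposet of a product of two ordered sets, in terms of the corners
of rectangles. -/
def MiddleExactOn (M : PersistenceModule k Q) : Prop :=
  ∀ ⦃a b c d : Q⦄ (R : IsRectangle a b c d) ⦃u : M.V b⦄ ⦃v : M.V c⦄,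
    M.map R.le_bd u = M.map R.le_cd v → ∃ w : M.V a, M.map R.le_ab w = u ∧ M.map R.le_ac w = v

/-! ### Extending sections row by row -/

/-- The element `v` of `M_c` maps to the values of the partial section `s` at all points above
`c` with coordinates in `X` and `Y`. -/
def Interpolates (s : Set (Σ q, M.V q)) (X : Set S) (Y : Set T) (v : M.V c) : Prop :=
  ∀ ⦃q : Q⦄ (h : c ≤ q) ⦃w : M.V q⦄, ⟨q, w⟩ ∈ s → q.1.1 ∈ X → q.1.2 ∈ Y → M.map h v = w

theorem exists_isLeast_column {D : Set Q} {x : S} {Y : Set T} (hY : Y.Finite)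
    (hne : {q ∈ D | q.1.1 = x ∧ q.1.2 ∈ Y}.Nonempty) :
    ∃ b, IsLeast {q ∈ D | q.1.1 = x ∧ q.1.2 ∈ Y} b := by
  obtain ⟨b, hb, hmin⟩ := Set.Finite.exists_minimalFor' (fun q : Q => q.1.2) _
    (hY.subset (Set.image_subset_iff.2 fun _ hq => hq.2.2)) hne
  exact ⟨b, hb, fun q hq => ⟨(hb.2.1.trans hq.2.1.symm).le, (le_total _ _).elim id (hmin hq)⟩⟩

variable {s : Set (Σ q, M.V q)} {X : Set S} {Y : Set T} {x₁ : S} {y₁ : T}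

theorem Interpolates.exists_insert (hQ : IsFilter Q) (hM : MiddleExactOn M)
    (hs : IsPartialSection M s) (hac : a ≤ c) (hbottom : a.1.2 = c.1.2) (hX : IsLeast X c.1.1)
    (hY : Y.Finite) (haY : a.1.2 ∈ lowerBounds Y)
    (hne : {q ∈ Sigma.fst '' s | q.1.1 = a.1.1 ∧ q.1.2 ∈ Y}.Nonempty)
    {v : M.V c} (hv : Interpolates s X Y v) :
    ∃ u : M.V a, Interpolates s (insert a.1.1 X) Y u := by
  -- An element with the prescribed value at the lowest point of its column is correct at all
  -- points above it.
  obtain ⟨b, ⟨⟨⟨b, w⟩, hw, rfl⟩, hbx, hbY⟩, hb⟩ := exists_isLeast_column hY hne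
  have R := IsRectangle.of_isFilter hQ ⟨hbx.symm.le, haY hbY⟩ hac hbx.symm hbottom
  obtain ⟨u, hub, huc⟩ := hM R (hv R.le_cd (hs.map_mem R.le_bd hw) hX.1 hbY).symm
  refine ⟨u, ?_⟩
  rintro q haq w' hw' (hqx | hqX) hqY
  · have hbq : b ≤ q := hb ⟨⟨_, hw', rfl⟩, hqx, hqY⟩
    rw [← M.map_map R.le_ab hbq, hub]
    exact hs.unique (hs.map_mem hbq hw) hw'
  · have hcq : c ≤ q := ⟨hX.2 hqX, hbottom.symm.le.trans haq.2⟩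
    rw [← M.map_map R.le_ac hcq, huc]
    exact hv hcq hw' hqX hqY

theorem IsPartialSection.exists_interpolates (hQ : IsFilter Q) (hM : MiddleExactOn M)
    (hs : IsPartialSection M s) (hdom : ∀ q, x₁ ≤ q.1.1 ∨ y₁ ≤ q.1.2 → q ∈ Sigma.fst '' s)
    (hY : Y.Finite) (hy₁ : y₁ ∈ Y) (haY : a.1.2 ∈ lowerBounds Y) (hx₁ : a.1.1 ≤ x₁)
    (X : Finset S) (hX : ∀ x ∈ X, a.1.1 ≤ x) :
    ∃ c : Q, a ≤ c ∧ a.1.2 = c.1.2 ∧ IsLeast (X ∪ Set.Ici x₁) c.1.1 ∧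
      ∃ v : M.V c, Interpolates s (X ∪ Set.Ici x₁) Y v := by
  classical
  induction X using Finset.induction_on_min with
  | empty =>
    obtain ⟨⟨c, v⟩, hv, hc⟩ := hdom ⟨(x₁, a.1.2), hQ a _ ⟨hx₁, le_rfl⟩ a.2⟩ (Or.inl le_rfl)
    have hc₁ : c.1.1 = x₁ := congrArg (fun q => q.1.1) hc
    have hc₂ : c.1.2 = a.1.2 := congrArg (fun q => q.1.2) hc
    refine ⟨c, ⟨hx₁.trans hc₁.symm.le, hc₂.symm.le⟩, hc₂.symm, ?_, v, ?_⟩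
    · simpa only [Finset.coe_empty, Set.empty_union, hc₁] using isLeast_Ici
    · exact fun q hcq w hw _ _ => hs.unique (hs.map_mem hcq hv) hw
  | insert x X hxX ih =>
    obtain ⟨hax, hX⟩ := Finset.forall_mem_insert _ _ _ |>.1 hX
    obtain ⟨c, hac, hbottom, hc, v, hv⟩ := ih hX
    rw [Finset.coe_insert, Set.insert_union]
    rcases le_or_gt x₁ x with hx | hx
    · rw [Set.insert_eq_of_mem (Set.mem_union_right _ (Set.mem_Ici.2 hx))]
      exact ⟨c, hac, hbottom, hc, v, hv⟩
    have hlt : x ∈ lowerBounds (X ∪ Set.Ici x₁) := by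
      rintro u (hu | hu)
      · exact (hxX u hu).le
      · exact hx.le.trans hu
    let a' : Q := ⟨(x, a.1.2), hQ a _ ⟨hax, le_rfl⟩ a.2⟩
    let b' : Q := ⟨(x, y₁), hQ a _ ⟨hax, haY hy₁⟩ a.2⟩
    obtain ⟨u, hu⟩ := hv.exists_insert (a := a') hQ hM hs ⟨hlt hc.1, hac.2⟩ hbottom hc hY haY
      ⟨b', hdom b' (Or.inr le_rfl), rfl, hy₁⟩
    exact ⟨a', ⟨hax, le_rfl⟩, rfl, ⟨Set.mem_insert _ _, by
      rintro u (rfl | hu)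
      exacts [le_rfl, hlt hu]⟩, u, hu⟩

theorem IsPartialSection.exists_forall_mem_cone (hQ : IsFilter Q) (hM : MiddleExactOn M)
    (hs : IsPartialSection M s) (hdom : ∀ q, x₁ ≤ q.1.1 ∨ y₁ ≤ q.1.2 → q ∈ Sigma.fst '' s)
    {F : Finset (Σ q, M.V q)} (hF : ↑F ⊆ s) (haF : ∀ z ∈ F, a ≤ z.1) :
    ∃ v : M.V a, ∀ z ∈ F, z ∈ cone v := by
  classical
  by_cases ha : x₁ ≤ a.1.1 ∨ y₁ ≤ a.1.2
  · obtain ⟨⟨_, v⟩, hv, rfl⟩ := hdom a ha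
    exact ⟨v, fun z hz => ⟨haF z hz, hs.unique (hs.map_mem (haF z hz) hv) (hF hz)⟩⟩
  push Not at ha
  obtain ⟨c, hac, hbottom, hc, v, hv⟩ := hs.exists_interpolates hQ hM hdom
    (Y := insert y₁ ((fun z => z.1.1.2) '' (F : Set (Σ q, M.V q))))
    ((F.finite_toSet.image _).insert _) (Set.mem_insert _ _)
    (by
      rintro _ (rfl | ⟨z, hz, rfl⟩)
      exacts [ha.2.le, (haF z hz).2])
    ha.1.le (insert a.1.1 (F.image fun z => z.1.1.1))
    (Finset.forall_mem_insert _ _ _ |>.2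
      ⟨le_rfl, Finset.forall_mem_image.2 fun z hz => (haF z hz).1⟩)
  obtain rfl : a = c := Subtype.ext (Prod.ext (hac.1.antisymm (hc.2 (by simp))) hbottom)
  exact ⟨v, fun z hz => ⟨haF z hz, hv (haF z hz) (hF hz)
    (Or.inl (Finset.mem_insert_of_mem (Finset.mem_image_of_mem _ hz))) (Or.inr ⟨z, hz, rfl⟩)⟩⟩

theorem IsPartialSection.exists_isSection_of_middleExactOn (hQ : IsFilter Q)
    (hfd : ∀ q, FiniteDimensional k (M.V q)) (hM : MiddleExactOn M) (hs : IsPartialSection M s)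
    (hdom : ∀ q, x₁ ≤ q.1.1 ∨ y₁ ≤ q.1.2 → q ∈ Sigma.fst '' s) :
    ∃ f, IsSection M f ∧ ∀ z ∈ s, f z.1 = z.2 :=
  hs.exists_isSection_of_finset hfd fun _ hst ht _ _ hF hpF =>
    ht.exists_forall_mem_cone hQ hM (fun q hq => Set.image_mono hst (hdom q hq)) hF hpF

/-! ### The block generated by an element -/

variable {m : M.V a}

/-- The first coordinates up to which `m` survives along the row of `a`. -/
def rowSupport (m : M.V a) : Set S :=
  lowerClosure ((fun q : Q => q.1.1) '' {q ∈ survivalSet m | a.1.2 = q.1.2})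

/-- The second coordinates up to which `m` survives along the column of `a`. -/
def columnSupport (m : M.V a) : Set T :=
  lowerClosure ((fun q : Q => q.1.2) '' {q ∈ survivalSet m | a.1.1 = q.1.1})

theorem isIdeal_rowSupport : IsIdeal (rowSupport m) :=
  fun _ _ h hq => (lowerClosure _).lower h hq

theorem isIdeal_columnSupport : IsIdeal (columnSupport m) :=
  fun _ _ h hq => (lowerClosure _).lower h hq

theorem mem_rowSupport (hc : c ∈ survivalSet m) (hbottom : a.1.2 = c.1.2) :
    c.1.1 ∈ rowSupport m :=
  subset_lowerClosure ⟨c, ⟨hc, hbottom⟩, rfl⟩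

theorem mem_columnSupport (hb : b ∈ survivalSet m) (hleft : a.1.1 = b.1.1) :
    b.1.2 ∈ columnSupport m :=
  subset_lowerClosure ⟨b, ⟨hb, hleft⟩, rfl⟩

theorem mem_prod_support_of_mem_survivalSet (hQ : IsFilter Q) {q : Q} (hq : q ∈ survivalSet m) :
    (q : S × T) ∈ rowSupport m ×ˢ columnSupport m := by
  have haq : a ≤ q := hq.1
  let b : Q := ⟨(a.1.1, q.1.2), hQ a _ ⟨le_rfl, haq.2⟩ a.2⟩
  let c : Q := ⟨(q.1.1, a.1.2), hQ a _ ⟨haq.1, le_rfl⟩ a.2⟩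
  have hb : b ∈ survivalSet m := mem_survivalSet_of_le hq ⟨le_rfl, haq.2⟩ ⟨haq.1, le_rfl⟩
  have hc : c ∈ survivalSet m := mem_survivalSet_of_le hq ⟨haq.1, le_rfl⟩ ⟨le_rfl, haq.2⟩
  exact ⟨mem_rowSupport (c := c) hc rfl, mem_columnSupport (b := b) hb rfl⟩

theorem lt_of_mem_rowSupport (hac : a ≤ c) (hbottom : a.1.2 = c.1.2) (hc : c ∉ survivalSet m)
    {x : S} (hx : x ∈ rowSupport m) : x < c.1.1 := by
  obtain ⟨_, ⟨q, ⟨hq, haq⟩, rfl⟩, hxq⟩ := hx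
  by_contra! hcx
  exact hc (mem_survivalSet_of_le hq hac ⟨hcx.trans hxq, (hbottom.symm.trans haq).le⟩)

theorem lt_of_mem_columnSupport (hab : a ≤ b) (hleft : a.1.1 = b.1.1) (hb : b ∉ survivalSet m)
    {y : T} (hy : y ∈ columnSupport m) : y < b.1.2 := by
  obtain ⟨_, ⟨q, ⟨hq, haq⟩, rfl⟩, hyq⟩ := hy
  by_contra! hby
  exact hb (mem_survivalSet_of_le hq hab ⟨(hleft.symm.trans haq).le, hby.trans hyq⟩)

/-- An element of `M_a` is generic if it survives at the top corner of a rectangle based at `a`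
whenever it survives at the two intermediate corners. -/
def IsGeneric (m : M.V a) : Prop :=
  ∀ ⦃b c d : Q⦄, IsRectangle a b c d → b ∈ survivalSet m → c ∈ survivalSet m →
    d ∈ survivalSet m

theorem IsGeneric.exists_ge_mem_survivalSet (hQ : IsFilter Q) (hm : IsGeneric m) {q : Q}
    (hq : (q : S × T) ∈ rowSupport m ×ˢ columnSupport m) : ∃ d ∈ survivalSet m, q ≤ d := by
  obtain ⟨⟨_, ⟨c, ⟨hc, hbottom⟩, rfl⟩, hqc⟩, ⟨_, ⟨b, ⟨hb, hleft⟩, rfl⟩, hqb⟩⟩ := hq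
  exact ⟨_, hm (.of_isFilter hQ hb.1 hc.1 hleft hbottom) hb hc, hqc, hqb⟩

theorem isGeneric_of_forall_eq_zero (hM : MiddleExactOn M) (hac : a ≤ c) (hbottom : a.1.2 = c.1.2)
    (hmc : M.map hac m = 0)
    (h : ∀ b (hab : a ≤ b), a.1.1 = b.1.1 → M.map hab m ≠ 0 →
      ∀ n, M.map hab n = 0 → M.map hac n = 0 → n = 0) : IsGeneric m := by
  refine fun b c' d R hb hc' => ⟨R.le_ab.trans R.le_bd, fun hd => ?_⟩
  have hc'c : c' ≤ c :=
    ⟨(lt_of_mem_rowSupport hac hbottom (fun hc => hc.2 hmc) (mem_rowSupport hc' R.bottom)).le,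
      (R.bottom.symm.trans hbottom).le⟩
  obtain ⟨n, hnb, hnc'⟩ : ∃ n, M.map R.le_ab n = M.map R.le_ab m ∧ M.map R.le_ac n = 0 :=
    hM R (by rw [M.map_map, hd, map_zero])
  have hnc : M.map hac n = 0 := by rw [← M.map_map R.le_ac hc'c, hnc', map_zero]
  have hmn : m - n = 0 := h b R.le_ab R.left hb.2 (m - n) (by rw [map_sub, hnb, sub_self])
    (by rw [map_sub, hmc, hnc, sub_self])
  rw [sub_eq_zero.1 hmn] at hc'
  exact hc'.2 hnc'

-- Among the points `b'` of the column of `a` for which some nonzero `m` dies both at `b'` and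
-- at `c`, one with a minimal kernel `ker (M_a → M_b')` is taken.
theorem exists_isGeneric (hM : MiddleExactOn M) [FiniteDimensional k (M.V a)] (hab : a ≤ b)
    (hac : a ≤ c) (hleft : a.1.1 = b.1.1) (hbottom : a.1.2 = c.1.2)
    (hker : ∃ m ≠ 0, M.map hab m = 0 ∧ M.map hac m = 0) :
    ∃ m : M.V a, m ≠ 0 ∧ IsGeneric m ∧ c ∉ survivalSet m ∧
      ∃ b', a ≤ b' ∧ a.1.1 = b'.1.1 ∧ b' ∉ survivalSet m := by
  obtain ⟨_, ⟨b', hab', hleft', rfl, m, hm, hmb, hmc⟩, hmin⟩ := IsArtinian.set_has_minimal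
    {K | ∃ (b' : Q) (h : a ≤ b'), a.1.1 = b'.1.1 ∧ LinearMap.ker (M.map h) = K ∧
      ∃ m ≠ 0, M.map h m = 0 ∧ M.map hac m = 0} ⟨_, b, hab, hleft, rfl, hker⟩
  have hb' : b' ∉ survivalSet m := fun h => h.2 hmb
  refine ⟨m, hm, isGeneric_of_forall_eq_zero hM hac hbottom hmc fun b₁ hab₁ hleft₁ hmb₁ n hnb hnc =>
    ?_, fun h => h.2 hmc, b', hab', hleft', hb'⟩
  have hb₁b' : b₁ ≤ b' := ⟨(hleft₁.symm.trans hleft').le,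
    (lt_of_mem_columnSupport hab' hleft' hb' (mem_columnSupport ⟨hab₁, hmb₁⟩ hleft₁)).le⟩
  have hlt : LinearMap.ker (M.map hab₁) < LinearMap.ker (M.map hab') :=
    SetLike.lt_iff_le_and_exists.2 ⟨fun v hv => by
      rw [LinearMap.mem_ker] at hv ⊢
      rw [← M.map_map hab₁ hb₁b', hv, map_zero], m, hmb, hmb₁⟩
  by_contra hn
  exact hmin _ ⟨b₁, hab₁, hleft₁, rfl, n, hn, hnb, hnc⟩ hlt

theorem isIdeal_preimage_prod_support (m : M.V a) :
    IsIdeal {q : Q | (q : S × T) ∈ rowSupport m ×ˢ columnSupport m} :=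
  fun _ _ h hq => ⟨isIdeal_rowSupport _ _ h.1 hq.1, isIdeal_columnSupport _ _ h.2 hq.2⟩

theorem exists_isSection_ne_zero_iff (hQ : IsFilter Q) (hfd : ∀ q, FiniteDimensional k (M.V q))
    (hM : MiddleExactOn M) (hm : IsGeneric m) (hab : a ≤ b) (hac : a ≤ c) (hleft : a.1.1 = b.1.1)
    (hbottom : a.1.2 = c.1.2) (hb : b ∉ survivalSet m) (hc : c ∉ survivalSet m) :
    ∃ f, IsSection M f ∧ ∀ q, f q ≠ 0 ↔ (q : S × T) ∈ rowSupport m ×ˢ columnSupport m := by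
  let I : Set Q := {q | (q : S × T) ∈ rowSupport m ×ˢ columnSupport m}
  have hs : IsPartialSection M (cone m ∪ {z | z.1 ∉ I ∧ z.2 = 0}) := by
    refine (isPartialSection_cone m).union (isPartialSection_zero_compl
      (isIdeal_preimage_prod_support m)) ?_
    rintro q v w ⟨h, hv⟩ ⟨hqI, hw⟩
    have hq : q ∉ survivalSet m := mt (mem_prod_support_of_mem_survivalSet hQ) hqI
    exact hv.symm.trans ((map_eq_zero_of_notMem_survivalSet h hq).trans hw.symm)
  obtain ⟨f, hf, hfs⟩ := hs.exists_isSection_of_middleExactOn (x₁ := c.1.1) (y₁ := b.1.2) hQ hfd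
    hM fun q hq => by
      have hqI : q ∉ I := fun hqI => hq.elim
        (lt_of_mem_rowSupport hac hbottom hc hqI.1).not_ge
        (lt_of_mem_columnSupport hab hleft hb hqI.2).not_ge
      exact ⟨⟨q, 0⟩, Or.inr ⟨hqI, rfl⟩, rfl⟩
  refine ⟨f, hf, fun q => ⟨fun hq => ?_, fun hq hfq => ?_⟩⟩
  · by_contra hqI
    exact hq (hfs ⟨q, 0⟩ (Or.inr ⟨hqI, rfl⟩))
  · obtain ⟨d, ⟨had, hd⟩, hqd⟩ := hm.exists_ge_mem_survivalSet hQ hq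
    have hfd : f d = M.map had m := hfs ⟨d, M.map had m⟩ (Or.inl ⟨had, rfl⟩)
    rw [← hf hqd, hfq, map_zero] at hfd
    exact hd hfd.symm

theorem directedOn_preimage_prod (hQ : IsFilter Q) {A : Set S} {B : Set T} :
    DirectedOn (· ≤ ·) {q : Q | (q : S × T) ∈ A ×ˢ B} := by
  intro p hp q hq
  refine ⟨⟨(max p.1.1 q.1.1, max p.1.2 q.1.2), hQ p _ ⟨le_max_left _ _, le_max_left _ _⟩ p.2⟩,
    ⟨?_, ?_⟩, ⟨le_max_left _ _, le_max_left _ _⟩, ⟨le_max_right _ _, le_max_right _ _⟩⟩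
  · rcases max_choice p.1.1 q.1.1 with h | h <;> simp only [h, hp.1, hq.1]
  · rcases max_choice p.1.2 q.1.2 with h | h <;> simp only [h, hp.2, hq.2]

end Product

theorem isFilter_upperT : IsFilter upperT := fun p _ h (hp : 0 < p.1 + p.2) =>
  hp.trans_le (add_le_add h.1 h.2)

theorem MiddleExactSub.middleExactOn {k : Type} [Field k] {Q : Set (ℝ × ℝ)}
    {M : PersistenceModule k Q} (hM : MiddleExactSub Q M) : MiddleExactOn M := by
  rintro ⟨⟨x, y⟩, ha⟩ ⟨⟨_, y'⟩, hb⟩ ⟨⟨x', _⟩, hc⟩ ⟨⟨_, _⟩, hd⟩ R u v huv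
  obtain rfl := R.left
  obtain rfl := R.right
  obtain rfl := R.bottom
  obtain rfl := R.top
  exact hM x x' y y' R.le_ac.1 R.le_ab.2 ha hb hc hd u v huv

end PMod

open PMod in
theorem stmt19_general {k S T : Type} [Field k] [LinearOrder S] [LinearOrder T] {Q : Set (S × T)}
    (hQ : IsFilter Q) (M : PersistenceModule k Q) (hfd : ∀ p, FiniteDimensional k (M.V p))
    (hM : MiddleExactOn M) {a b c : Q} (hab : a ≤ b) (hac : a ≤ c) (hleft : a.1.1 = b.1.1)
    (hbottom : a.1.2 = c.1.2) (hker : ∃ m ≠ 0, M.map hab m = 0 ∧ M.map hac m = 0) :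
    ∃ (JS : Set S) (JT : Set T)
      (h : (IsIntervalLin JS ∧ IsIdeal JS) ∧ (IsIntervalLin JT ∧ IsIdeal JT)),
      (a : S × T) ∈ JS ×ˢ JT ∧ ∃ N, Isomorphic M (sum2 (intervalModule k
        {p : Q | (p : S × T) ∈ JS ×ˢ JT} ((h.1.1.2.prod h.2.1.2).preimage Q)) N) := by
  have := hfd a
  obtain ⟨m, hm, hgen, hc, b', hab', hleft', hb'⟩ := exists_isGeneric hM hab hac hleft hbottom hker
  obtain ⟨f, hf, hfI⟩ :=
    exists_isSection_ne_zero_iff hQ hfd hM hgen hab' hac hleft' hbottom hb' hc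
  have ham : a ∈ survivalSet m := ⟨le_rfl, by rwa [M.map_self]⟩
  have ha : (a : S × T) ∈ rowSupport m ×ˢ columnSupport m :=
    mem_prod_support_of_mem_survivalSet hQ ham
  exact ⟨rowSupport m, columnSupport m,
    ⟨⟨⟨⟨_, ha.1⟩, isIdeal_rowSupport.isConvex⟩, isIdeal_rowSupport⟩,
      ⟨⟨_, ha.2⟩, isIdeal_columnSupport.isConvex⟩, isIdeal_columnSupport⟩, ha,
    hf.exists_isomorphic_sum2_intervalModule (isIdeal_preimage_prod_support m) ⟨a, ha⟩
      (directedOn_preimage_prod hQ) hfI⟩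

open PMod in
/-- Lemma 4.9: an indecomposable pointwise finite-dimensional middle exact module over
the strictly upper-triangular subposet of the plane with a nonzero common kernel
element is the restriction of a block module of type (db). -/
theorem stmt19 {k : Type} [Field k] (M : PersistenceModule k ↥upperT)
    (hfd : ∀ p, FiniteDimensional k (M.V p)) (hme : MiddleExactSub upperT M)
    (hind : Indecomposable M)
    (x x' y y' : ℝ) (hx : x ≤ x') (hy : y ≤ y')
    (ha : (x, y) ∈ upperT) (hb : (x, y') ∈ upperT) (hc : (x', y) ∈ upperT)
    (hker : ∃ m : M.V ⟨(x, y), ha⟩, m ≠ 0 ∧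
      M.map (show (⟨(x, y), ha⟩ : ↥upperT) ≤ ⟨(x, y'), hb⟩ from
        Subtype.mk_le_mk.mpr ⟨le_refl x, hy⟩) m = 0 ∧
      M.map (show (⟨(x, y), ha⟩ : ↥upperT) ≤ ⟨(x', y), hc⟩ from
        Subtype.mk_le_mk.mpr ⟨hx, le_refl y⟩) m = 0) :
    ∃ (JS JT : Set ℝ)
      (h : (IsIntervalLin JS ∧ IsIdeal JS) ∧ (IsIntervalLin JT ∧ IsIdeal JT)),
      Isomorphic M (intervalModule k {p : ↥upperT | (p : ℝ × ℝ) ∈ JS ×ˢ JT}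
        ((h.1.1.2.prod h.2.1.2).preimageSub upperT)) := by
  obtain ⟨JS, JT, h, ha', N, e⟩ := stmt19_general isFilter_upperT M hfd hme.middleExactOn
    (a := ⟨(x, y), ha⟩) (b := ⟨(x, y'), hb⟩) (c := ⟨(x', y), hc⟩) ⟨le_rfl, hy⟩ ⟨hx, le_rfl⟩
    rfl rfl hker
  exact ⟨JS, JT, h, hind.isomorphic_of_isomorphic_sum2 (not_isZero_intervalModule _ ⟨_, ha'⟩) e⟩
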